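/- Let a < b be real numbers, let 0 < α < 1 and let n ≥ 1 be a natural number. Let g : ℕ → (ℝ → ℝ) be a sequence of functions such that for every i ≤ n, g_i is continuous on [a,b], for every i < n, g_i is differentiable with continuous derivative on [a,b] and g_{i+1}(t) = (1/Γ(1−α)) ∫_a^t (t−s)^(−α) g_i′(s) ds for all t ∈ [a,b] (i.e. g_{i+1} is the Caputo fractional derivative of order α of g_i). Define inductively H₀ = g_n and H_{j+1}(t) = (1/Γ(α)) ∫_a^t (t−s)^(α−1) H_j(s) ds. Then for every t ∈ [a,b], g₀(t) = Σ_{i=0}^{n−1} g_i(a) · (t−a)^(iα)/Γ(iα+1) + H_n(t). -/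

import Mathlib

open MeasureTheory Set

/-- The beta integral over the interval `[r, t]`. -/
theorem integral_sub_rpow_mul_sub_rpow {r t p q : ℝ} (hrt : r < t) (hp : 0 < p) (hq : 0 < q) :
    ∫ s in r..t, (t - s) ^ (p - 1) * (s - r) ^ (q - 1) =
      (t - r) ^ (p + q - 1) * (Real.Gamma p * Real.Gamma q / Real.Gamma (p + q)) := by
  have hsub : 0 < t - r := sub_pos.2 hrt
  have hshift : ∫ s in r..t, (t - s) ^ (p - 1) * (s - r) ^ (q - 1) =
      ∫ x in (0 : ℝ)..(t - r), x ^ (q - 1) * (t - r - x) ^ (p - 1) := by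
    have := intervalIntegral.integral_comp_sub_right (a := r) (b := t)
      (fun x : ℝ => x ^ (q - 1) * (t - r - x) ^ (p - 1)) r
    rw [sub_self] at this
    rw [← this]
    congr 1 with s
    rw [mul_comm, show t - r - (s - r) = t - s by ring]
  have hbeta := Complex.betaIntegral_scaled (q : ℂ) (p : ℂ) hsub
  rw [Complex.betaIntegral_eq_Gamma_mul_div _ _ (by simpa) (by simpa)] at hbeta
  rw [hshift]
  apply Complex.ofReal_injective
  rw [← intervalIntegral.integral_ofReal]
  trans ∫ x in (0 : ℝ)..(t - r),
      (x : ℂ) ^ ((q : ℂ) - 1) * (((t - r : ℝ) : ℂ) - x) ^ ((p : ℂ) - 1)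
  · refine intervalIntegral.integral_congr fun x hx => ?_
    rw [uIcc_of_le hsub.le] at hx
    have hx' : 0 ≤ t - r - x := sub_nonneg.2 hx.2
    rw [Complex.ofReal_mul, Complex.ofReal_cpow hx.1, Complex.ofReal_cpow hx']
    push_cast
    rfl
  · rw [hbeta, Complex.ofReal_mul, Complex.ofReal_cpow hsub.le, Complex.ofReal_div,
      Complex.ofReal_mul, ← Complex.Gamma_ofReal, ← Complex.Gamma_ofReal, ← Complex.Gamma_ofReal]
    push_cast
    rw [add_comm (q : ℂ) p, mul_comm (Complex.Gamma q)]

theorem intervalIntegrable_sub_rpow_mul_sub_rpow {r t p q : ℝ} (hrt : r < t) (hp : 0 < p)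
    (hq : 0 < q) :
    IntervalIntegrable (fun s => (t - s) ^ (p - 1) * (s - r) ^ (q - 1)) volume r t := by
  refine intervalIntegral.intervalIntegrable_of_integral_ne_zero ?_
  rw [integral_sub_rpow_mul_sub_rpow hrt hp hq]
  have := Real.Gamma_pos_of_pos hp
  have := Real.Gamma_pos_of_pos hq
  have := Real.Gamma_pos_of_pos (add_pos hp hq)
  have := Real.rpow_pos_of_pos (sub_pos.2 hrt) (p + q - 1)
  positivity

/-- The kernel of the composition of fractional integrals of orders `α` and `1 - α`. -/
noncomputable def abelKernel (α t r s : ℝ) : ℝ :=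
  (Ioi r).indicator (fun s => (t - s) ^ (α - 1) * (s - r) ^ (-α)) s

theorem integrableOn_abelKernel {a t α r : ℝ} (hα0 : 0 < α) (hα1 : α < 1) (hr : r ∈ Ioc a t) :
    IntegrableOn (abelKernel α t r) (Ioc a t) := by
  unfold abelKernel
  rw [IntegrableOn, integrable_indicator_iff measurableSet_Ioi, IntegrableOn,
    Measure.restrict_restrict measurableSet_Ioi, inter_comm, Ioc_inter_Ioi, sup_of_le_right hr.1.le]
  rcases hr.2.eq_or_lt with rfl | hrt
  · simp
  · have := intervalIntegrable_sub_rpow_mul_sub_rpow hrt hα0 (sub_pos.2 hα1)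
    rw [intervalIntegrable_iff_integrableOn_Ioc_of_le hrt.le] at this
    simpa [IntegrableOn] using this

theorem setIntegral_abelKernel {a t α r : ℝ} (hα0 : 0 < α) (hα1 : α < 1) (hr : r ∈ Ioo a t) :
    ∫ s in Ioc a t, abelKernel α t r s = Real.Gamma α * Real.Gamma (1 - α) := by
  unfold abelKernel
  rw [setIntegral_indicator measurableSet_Ioi, Ioc_inter_Ioi, sup_of_le_right hr.1.le,
    ← intervalIntegral.integral_of_le hr.2.le]
  simpa using integral_sub_rpow_mul_sub_rpow hr.2 hα0 (sub_pos.2 hα1)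

theorem abelKernel_nonneg {α t r s : ℝ} (hs : s ≤ t) : 0 ≤ abelKernel α t r s := by
  refine indicator_apply_nonneg fun hrs => ?_
  have := sub_nonneg.2 hs
  have := sub_pos.2 (mem_Ioi.1 hrs)
  positivity

theorem measurable_abelKernel (α t : ℝ) :
    Measurable fun x : ℝ × ℝ => abelKernel α t x.1 x.2 := by
  have h : (fun x : ℝ × ℝ => abelKernel α t x.1 x.2) =
      {x : ℝ × ℝ | x.1 < x.2}.indicator
        fun x => (t - x.2) ^ (α - 1) * (x.2 - x.1) ^ (-α) := by
    ext x
    simp [abelKernel, indicator_apply]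
  rw [h]
  exact Measurable.indicator (by fun_prop) (measurableSet_lt measurable_fst measurable_snd)

theorem ae_restrict_mem_Ioo (a t : ℝ) : ∀ᵐ r ∂volume.restrict (Ioc a t), r ∈ Ioo a t := by
  rw [← restrict_Ioo_eq_restrict_Ioc]
  exact ae_restrict_mem measurableSet_Ioo

theorem integrable_abelKernel (a t : ℝ) {α : ℝ} (hα0 : 0 < α) (hα1 : α < 1) :
    Integrable (fun x : ℝ × ℝ => abelKernel α t x.1 x.2)
      ((volume.restrict (Ioc a t)).prod (volume.restrict (Ioc a t))) := by
  rw [integrable_prod_iff (measurable_abelKernel α t).aestronglyMeasurable]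
  constructor
  · filter_upwards [ae_restrict_mem measurableSet_Ioc] with r hr
    exact integrableOn_abelKernel hα0 hα1 hr
  · refine (integrable_const (Real.Gamma α * Real.Gamma (1 - α))).congr ?_
    filter_upwards [ae_restrict_mem_Ioo a t] with r hr
    rw [← setIntegral_abelKernel hα0 hα1 hr]
    refine setIntegral_congr_fun measurableSet_Ioc fun s hs => ?_
    exact (Real.norm_of_nonneg (abelKernel_nonneg hs.2)).symm

/-- Composing the (unnormalised) fractional integrals of orders `1 - α` and `α` yields a multiple
of the ordinary integral. -/
theorem integral_sub_rpow_mul_integral_sub_rpow {a t α : ℝ} (hat : a ≤ t) (hα0 : 0 < α)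
    (hα1 : α < 1) {φ : ℝ → ℝ} (hφ : ContinuousOn φ (Icc a t)) :
    ∫ s in a..t, (t - s) ^ (α - 1) * ∫ r in a..s, (s - r) ^ (-α) * φ r =
      Real.Gamma α * Real.Gamma (1 - α) * ∫ r in a..t, φ r := by
  set μ := volume.restrict (Ioc a t) with hμ
  obtain ⟨C, hC⟩ := isCompact_Icc.exists_bound_of_continuousOn hφ
  have hφm : AEStronglyMeasurable φ μ :=
    (hφ.mono Ioc_subset_Icc_self).aestronglyMeasurable measurableSet_Ioc
  have hint : Integrable (fun x : ℝ × ℝ => φ x.1 * abelKernel α t x.1 x.2) (μ.prod μ) := by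
    refine (integrable_abelKernel a t hα0 hα1).bdd_mul (c := C) hφm.comp_fst ?_
    refine Measure.quasiMeasurePreserving_fst.ae (p := fun r => ‖φ r‖ ≤ C) ?_
    filter_upwards [ae_restrict_mem measurableSet_Ioc] with r hr
    exact hC r (Ioc_subset_Icc_self hr)
  have hswap := integral_integral_swap (f := fun r s => φ r * abelKernel α t r s) hint
  rw [intervalIntegral.integral_of_le hat, intervalIntegral.integral_of_le hat,
    ← integral_const_mul]
  trans ∫ s, ∫ r, φ r * abelKernel α t r s ∂μ ∂μ
  · refine setIntegral_congr_fun measurableSet_Ioc fun s hs => ?_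
    have hker : ∀ r, φ r * abelKernel α t r s =
        (Iio s).indicator (fun r => (t - s) ^ (α - 1) * ((s - r) ^ (-α) * φ r)) r := by
      intro r
      by_cases hrs : r < s <;> simp [abelKernel, hrs]
      ring
    simp_rw [hker]
    have hset : Ioc a t ∩ Iio s = Ioo a s := by
      ext r
      simp only [mem_inter_iff, mem_Ioc, mem_Iio, mem_Ioo]
      exact ⟨fun h => ⟨h.1.1, h.2⟩, fun h => ⟨⟨h.1, h.2.le.trans hs.2⟩, h.2⟩⟩
    rw [hμ, setIntegral_indicator measurableSet_Iio, hset, ← integral_Ioc_eq_integral_Ioo,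
      integral_const_mul, intervalIntegral.integral_of_le hs.1.le]
  · rw [← hswap]
    refine integral_congr_ae ?_
    filter_upwards [ae_restrict_mem_Ioo a t] with r hr
    rw [integral_const_mul, setIntegral_abelKernel hα0 hα1 hr, mul_comm]

/-- The fractional integral of the Caputo derivative recovers the increment of the function. -/
theorem fractionalIntegral_caputo {a t α : ℝ} (hat : a ≤ t) (hα0 : 0 < α) (hα1 : α < 1)
    {f f' h : ℝ → ℝ} (hf : ∀ s ∈ Icc a t, HasDerivAt f (f' s) s)
    (hf' : ContinuousOn f' (Icc a t))
    (hh : ∀ s ∈ Icc a t,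
      h s = (1 / Real.Gamma (1 - α)) * ∫ r in a..s, (s - r) ^ (-α) * f' r) :
    (1 / Real.Gamma α) * ∫ s in a..t, (t - s) ^ (α - 1) * h s = f t - f a := by
  have hftc : ∫ r in a..t, f' r = f t - f a := by
    rw [← uIcc_of_le hat] at hf hf'
    exact intervalIntegral.integral_eq_sub_of_hasDerivAt hf hf'.intervalIntegrable
  have hrw : ∫ s in a..t, (t - s) ^ (α - 1) * h s = ∫ s in a..t,
      (1 / Real.Gamma (1 - α)) * ((t - s) ^ (α - 1) * ∫ r in a..s, (s - r) ^ (-α) * f' r) := by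
    refine intervalIntegral.integral_congr fun s hs => ?_
    rw [uIcc_of_le hat] at hs
    simp only [hh s hs]
    ring
  have h1 := (Real.Gamma_pos_of_pos hα0).ne'
  have h2 := (Real.Gamma_pos_of_pos (sub_pos.2 hα1)).ne'
  rw [hrw, intervalIntegral.integral_const_mul,
    integral_sub_rpow_mul_integral_sub_rpow hat hα0 hα1 hf', hftc]
  field_simp

theorem intervalIntegrable_sub_rpow_mul {a t α : ℝ} (hat : a ≤ t) (hα0 : 0 < α)
    {f : ℝ → ℝ} (hf : ContinuousOn f (Icc a t)) :
    IntervalIntegrable (fun s => (t - s) ^ (α - 1) * f s) volume a t := by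
  rw [← uIcc_of_le hat] at hf
  refine IntervalIntegrable.mul_continuousOn ?_ hf
  have := (intervalIntegral.intervalIntegrable_rpow' (a := t - a) (b := t - t)
    (r := α - 1) (by linarith)).comp_sub_left t
  simpa using this

/-- The fractional integral of a power function. -/
theorem fractionalIntegral_rpow {a t α β : ℝ} (hat : a ≤ t) (hα0 : 0 < α) (hβ : 0 ≤ β) :
    (1 / Real.Gamma α) * ∫ s in a..t, (t - s) ^ (α - 1) * ((s - a) ^ β / Real.Gamma (β + 1)) =
      (t - a) ^ (β + α) / Real.Gamma (β + α + 1) := by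
  rcases hat.eq_or_lt with rfl | hlt
  · simp [Real.zero_rpow (by positivity : β + α ≠ 0)]
  have h1 := (Real.Gamma_pos_of_pos hα0).ne'
  have h2 := (Real.Gamma_pos_of_pos (by positivity : 0 < β + 1)).ne'
  have hbeta := integral_sub_rpow_mul_sub_rpow hlt hα0 (by positivity : 0 < β + 1)
  rw [add_sub_cancel_right, show α + (β + 1) = β + α + 1 by ring, add_sub_cancel_right] at hbeta
  simp_rw [← mul_div_assoc]
  rw [intervalIntegral.integral_div, hbeta]
  field_simp

/-- Theorem 4.1, part I (crisp form): generalized fractional Taylor theorem.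
If `g_{i+1}` is the Caputo fractional derivative of order `α` of `g_i` for `i < n`,
and `H_n` is the `n`-fold Riemann–Liouville fractional integral of order `α`
of `g_n`, then `g₀(t) = Σ_{i=0}^{n−1} g_i(a)·(t−a)^(iα)/Γ(iα+1) + H_n(t)`. -/
theorem generalized_fractional_taylor
    (a b α : ℝ) (hab : a < b) (hα0 : 0 < α) (hα1 : α < 1)
    (n : ℕ) (hn : 1 ≤ n)
    (g g' : ℕ → ℝ → ℝ)
    (hgcont : ∀ i ≤ n, ContinuousOn (g i) (Set.Icc a b))
    (hgderiv : ∀ i < n, ∀ t ∈ Set.Icc a b, HasDerivAt (g i) (g' i t) t)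
    (hg'cont : ∀ i < n, ContinuousOn (g' i) (Set.Icc a b))
    (hcaputo : ∀ i < n, ∀ t ∈ Set.Icc a b,
      g (i + 1) t = (1 / Real.Gamma (1 - α)) * ∫ s in a..t, (t - s) ^ (-α) * g' i s)
    (H : ℕ → ℝ → ℝ) (hH0 : H 0 = g n)
    (hH : ∀ j, ∀ t ∈ Set.Icc a b,
      H (j + 1) t = (1 / Real.Gamma α) * ∫ s in a..t, (t - s) ^ (α - 1) * H j s) :
    ∀ t ∈ Set.Icc a b,
      g 0 t = (∑ i ∈ Finset.range n,
        g i a * (t - a) ^ ((i : ℝ) * α) / Real.Gamma ((i : ℝ) * α + 1)) + H n t := by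
  suffices hmain : ∀ j m, m + j = n → ∀ t ∈ Set.Icc a b,
      g m t = (∑ i ∈ Finset.range j,
        g (m + i) a * (t - a) ^ ((i : ℝ) * α) / Real.Gamma ((i : ℝ) * α + 1)) + H j t by
    simpa using hmain n 0 (zero_add n)
  intro j
  induction j with
  | zero =>
    intro m hm t _
    obtain rfl : m = n := hm
    simp [hH0]
  | succ j ih =>
    intro m hm t ht
    have hmn : m < n := by omega
    have hsub : Icc a t ⊆ Icc a b := Icc_subset_Icc_right ht.2
    have hIg := fractionalIntegral_caputo ht.1 hα0 hα1 (fun s hs => hgderiv m hmn s (hsub hs))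
      ((hg'cont m hmn).mono hsub) (fun s hs => hcaputo m hmn s (hsub hs))
    have hHj : ∀ s ∈ Icc a t, H j s = g (m + 1) s - ∑ i ∈ Finset.range j,
        g (m + 1 + i) a * ((s - a) ^ ((i : ℝ) * α) / Real.Gamma ((i : ℝ) * α + 1)) := by
      intro s hs
      rw [ih (m + 1) (by omega) s (hsub hs)]
      simp only [mul_div_assoc, add_sub_cancel_left]
    have hpow : ∀ i : ℕ, IntervalIntegrable (fun s => g (m + 1 + i) a * ((t - s) ^ (α - 1) *
        ((s - a) ^ ((i : ℝ) * α) / Real.Gamma ((i : ℝ) * α + 1)))) volume a t := by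
      intro i
      refine (intervalIntegrable_sub_rpow_mul ht.1 hα0 ?_).const_mul _
      have hi : 0 ≤ (i : ℝ) * α := by positivity
      exact (((continuous_id.sub continuous_const).rpow_const
        fun _ => Or.inr hi).div_const _).continuousOn
    have hHint : ∫ s in a..t, (t - s) ^ (α - 1) * H j s =
        (∫ s in a..t, (t - s) ^ (α - 1) * g (m + 1) s) - ∑ i ∈ Finset.range j,
          g (m + 1 + i) a * ∫ s in a..t, (t - s) ^ (α - 1) *
            ((s - a) ^ ((i : ℝ) * α) / Real.Gamma ((i : ℝ) * α + 1)) := by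
      simp_rw [← intervalIntegral.integral_const_mul]
      rw [← intervalIntegral.integral_finsetSum fun i _ => hpow i,
        ← intervalIntegral.integral_sub
          (intervalIntegrable_sub_rpow_mul ht.1 hα0 ((hgcont (m + 1) hmn).mono hsub))
          (by simpa only [Finset.sum_fn] using
            IntervalIntegrable.sum (Finset.range j) fun i _ => hpow i)]
      refine intervalIntegral.integral_congr fun s hs => ?_
      rw [uIcc_of_le ht.1] at hs
      simp only [hHj s hs, mul_sub, Finset.mul_sum]
      congr 1
      exact Finset.sum_congr rfl fun i _ => by ring
    have hsum : (1 / Real.Gamma α) * ∑ i ∈ Finset.range j,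
          g (m + 1 + i) a * ∫ s in a..t, (t - s) ^ (α - 1) *
            ((s - a) ^ ((i : ℝ) * α) / Real.Gamma ((i : ℝ) * α + 1)) =
        ∑ i ∈ Finset.range j, g (m + (i + 1)) a * (t - a) ^ (((i + 1 : ℕ) : ℝ) * α) /
          Real.Gamma (((i + 1 : ℕ) : ℝ) * α + 1) := by
      rw [Finset.mul_sum]
      refine Finset.sum_congr rfl fun i _ => ?_
      rw [mul_left_comm, fractionalIntegral_rpow ht.1 hα0 (by positivity),
        show m + 1 + i = m + (i + 1) by ring, mul_div_assoc]
      push_cast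
      rw [add_one_mul]
    rw [hH j t ht, hHint, mul_sub, hIg, hsum, Finset.sum_range_succ']
    simp
    ring
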